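/- (IAG, strongly convex case.) Fix integers τ ≥ 1 and K > τ, and set α = 1/(16 L τ). Suppose the (deterministic) sampling sequence has staleness bounded by τ up to horizon K, and that f is μ-strongly convex (μ > 0) with minimizer x* and κ := L/μ. Then the IAG iterates (i.e., the iterates driven by the SAG direction) satisfy f(x_K) − f(x*) ≤ 6 L B² · (1 − 1/(64 τ κ))^K. -/

import Mathlib

open scoped RealInnerProductSpace

/-!
The direction `g k` is the average of the stored gradients after the update at time `k`. Under
bounded staleness each of them was evaluated at one of the last `τ` iterates, so `g k` misses
`∇ f (x k)` by at most `α L` times the sum of the last `τ` values of `‖g j‖`. A step of gradient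
descent with such an error satisfies, by the Polyak–Łojasiewicz inequality,
`gap (k + 1) ≤ (1 - α μ) gap k - a ‖g k‖² + b ∑ ‖g j‖²`, the sum being over the last `τ` steps.
Adding to the gap the sum of those `‖g j‖²` with weights `2 b, 4 b, …, 2 b τ`, newest heaviest,
gives a Lyapunov function: one time step lowers every weight by `2 b`, which absorbs the error sum,
and the term `- a ‖g k‖²` pays for the new entry. During the first `τ` steps, when stored gradients
may still be zero, the iterates stay within `B` of the starting point, which bounds the initial
value of the Lyapunov function.
-/

section DelayedDescent

/-- The sum of `τ` consecutive terms of `G` starting at index `n`, with weights `1, …, τ`: the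
memory part of the Lyapunov function for recursions with delay at most `τ`. -/
def weightedWindowSum (G : ℕ → ℝ) (τ n : ℕ) : ℝ :=
  ∑ s ∈ Finset.range τ, ((s : ℝ) + 1) * G (n + s)

variable {F G : ℕ → ℝ} {τ : ℕ}

theorem weightedWindowSum_nonneg (hG : ∀ n, 0 ≤ G n) (n : ℕ) : 0 ≤ weightedWindowSum G τ n :=
  Finset.sum_nonneg fun _ _ => mul_nonneg (by positivity) (hG _)

theorem weightedWindowSum_le (hG : ∀ n, 0 ≤ G n) (n : ℕ) :
    weightedWindowSum G τ n ≤ τ * ∑ s ∈ Finset.range τ, G (n + s) := by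
  rw [weightedWindowSum, Finset.mul_sum]
  refine Finset.sum_le_sum fun s hs => mul_le_mul_of_nonneg_right ?_ (hG _)
  exact_mod_cast Finset.mem_range.1 hs

theorem weightedWindowSum_succ (G : ℕ → ℝ) (τ n : ℕ) :
    weightedWindowSum G τ (n + 1) =
      weightedWindowSum G τ n - ∑ s ∈ Finset.range τ, G (n + s) + τ * G (n + τ) := by
  have shifted : weightedWindowSum G τ (n + 1) =
      ∑ s ∈ Finset.range (τ + 1), (s : ℝ) * G (n + s) := by
    rw [Finset.sum_range_succ', weightedWindowSum]
    simp [add_assoc, add_comm 1]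
  have lowered : weightedWindowSum G τ n - ∑ s ∈ Finset.range τ, G (n + s) =
      ∑ s ∈ Finset.range τ, (s : ℝ) * G (n + s) := by
    rw [weightedWindowSum, ← Finset.sum_sub_distrib]
    exact Finset.sum_congr rfl fun s _ => by ring
  rw [shifted, lowered, Finset.sum_range_succ]

theorem le_pow_mul_of_delayed_descent {a b r : ℝ} {M : ℕ} (hb : 0 ≤ b) (hr : 0 ≤ r) (hr1 : r ≤ 1)
    (hrτ : 2 * r * τ ≤ 1) (hab : 2 * b * τ ≤ a) (hG : ∀ n, 0 ≤ G n)
    (hstep : ∀ n < M, F (n + 1) ≤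
      (1 - r) * F n - a * G (n + τ) + b * ∑ s ∈ Finset.range τ, G (n + s)) :
    F M ≤ (1 - r) ^ M * (F 0 + 2 * b * weightedWindowSum G τ 0) := by
  have contraction : ∀ n < M, F (n + 1) + 2 * b * weightedWindowSum G τ (n + 1) ≤
      (1 - r) * (F n + 2 * b * weightedWindowSum G τ n) := by
    intro n hn
    set S := ∑ s ∈ Finset.range τ, G (n + s) with hS
    have hS0 : 0 ≤ S := Finset.sum_nonneg fun _ _ => hG _
    have memory_decay : 2 * r * weightedWindowSum G τ n ≤ S := calc
      2 * r * weightedWindowSum G τ n ≤ 2 * r * (τ * S) := by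
        gcongr; exact weightedWindowSum_le hG n
      _ = 2 * r * τ * S := by ring
      _ ≤ S := mul_le_of_le_one_left hS0 hrτ
    have new_entry := mul_le_mul_of_nonneg_right hab (hG (n + τ))
    rw [weightedWindowSum_succ, ← hS]
    linarith [hstep n hn, mul_le_mul_of_nonneg_left memory_decay hb]
  have decay := le_geom (u := fun n => F n + 2 * b * weightedWindowSum G τ n)
    (sub_nonneg.2 hr1) M contraction
  exact (le_add_of_nonneg_right
    (mul_nonneg (by positivity) (weightedWindowSum_nonneg hG M))).trans decay

theorem half_le_one_sub_pow {r : ℝ} {k : ℕ} (hr1 : r ≤ 1) (hrk : r * k ≤ 1 / 2) :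
    1 / 2 ≤ (1 - r) ^ k := by
  have bernoulli := one_add_mul_le_pow (a := -r) (by linarith) k
  rw [← sub_eq_add_neg] at bernoulli
  linarith

end DelayedDescent

theorem norm_inv_card_smul_sum_le {ι E : Type*} [Fintype ι] [Nonempty ι] [NormedAddCommGroup E]
    [NormedSpace ℝ E] {v : ι → E} {C : ℝ} (hv : ∀ i, ‖v i‖ ≤ C) :
    ‖(Fintype.card ι : ℝ)⁻¹ • ∑ i, v i‖ ≤ C := by
  have hcard : (0 : ℝ) < Fintype.card ι := by exact_mod_cast Fintype.card_pos
  rw [norm_smul, Real.norm_of_nonneg (by positivity), inv_mul_le_iff₀ hcard]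
  simpa using norm_sum_le_of_le Finset.univ fun i _ => hv i

theorem apply_one_le_of_hasDerivAt_le {φ φ' : ℝ → ℝ} {a C : ℝ} (hφ : ∀ t, HasDerivAt φ (φ' t) t)
    (hbound : ∀ t, 0 ≤ t → φ' t ≤ a + C * t) : φ 1 ≤ φ 0 + a + C / 2 := by
  have hquad : ∀ t : ℝ, HasDerivAt (fun t => φ 0 + a * t + C / 2 * t ^ 2) (a + C * t) t := by
    intro t
    refine ((((hasDerivAt_id t).const_mul a).const_add (φ 0)).add
      ((hasDerivAt_pow 2 t).const_mul (C / 2))).congr_deriv ?_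
    norm_num
    ring
  have hle := image_le_of_deriv_right_le_deriv_boundary (a := 0) (b := 1)
    (fun t _ => (hφ t).continuousAt.continuousWithinAt) (fun t _ => (hφ t).hasDerivWithinAt)
    (by simp) (fun t _ => (hquad t).continuousAt.continuousWithinAt)
    (fun t _ => (hquad t).hasDerivWithinAt) (fun t ht => hbound t ht.1)
    (Set.right_mem_Icc.2 zero_le_one)
  simpa using hle

section Smooth

variable {E : Type*} [NormedAddCommGroup E] [InnerProductSpace ℝ E] [CompleteSpace E]
variable {f : E → ℝ} {L μ : ℝ}

/-- `L`-smoothness: `f` is differentiable and its gradient is `L`-Lipschitz. The constant is a real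
number and the Lipschitz bound is spelled out, so that no coercion from `ℝ≥0` intervenes. -/
structure LSmooth (L : ℝ) (f : E → ℝ) : Prop where
  differentiable : Differentiable ℝ f
  norm_gradient_sub_le : ∀ x y, ‖gradient f x - gradient f y‖ ≤ L * ‖x - y‖

/-- The Polyak–Łojasiewicz inequality with constant `μ`, for the gap of `f` above its value at
`xstar`; the consequence of strong convexity that drives linear convergence. -/
def PolyakLojasiewicz (μ : ℝ) (f : E → ℝ) (xstar : E) : Prop :=
  ∀ y, 2 * μ * (f y - f xstar) ≤ ‖gradient f y‖ ^ 2

theorem gradient_eq_zero_of_forall_le {x : E} (hx : ∀ y, f x ≤ f y) : gradient f x = 0 := by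
  have hlocal : IsLocalMin f x := Filter.Eventually.of_forall hx
  rw [gradient, hlocal.fderiv_eq_zero, map_zero]

namespace LSmooth

theorem apply_add_le (hf : LSmooth L f) (x v : E) :
    f (x + v) ≤ f x + ⟪gradient f x, v⟫ + L / 2 * ‖v‖ ^ 2 := by
  have hderiv : ∀ t : ℝ,
      HasDerivAt (fun t : ℝ => f (x + t • v)) ⟪gradient f (x + t • v), v⟫ t := by
    intro t
    have hline : HasDerivAt (fun t : ℝ => x + t • v) v t := by
      simpa using ((hasDerivAt_id t).smul_const v).const_add x
    rw [inner_gradient_left]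
    exact (hf.differentiable (x + t • v)).hasFDerivAt.comp_hasDerivAt t hline
  have hslope : ∀ t : ℝ, 0 ≤ t →
      ⟪gradient f (x + t • v), v⟫ ≤ ⟪gradient f x, v⟫ + L * ‖v‖ ^ 2 * t := by
    intro t ht
    have hgrad : ‖gradient f (x + t • v) - gradient f x‖ ≤ L * (t * ‖v‖) := by
      simpa [norm_smul, abs_of_nonneg ht] using hf.norm_gradient_sub_le (x + t • v) x
    rw [← sub_le_iff_le_add', ← inner_sub_left]
    calc ⟪gradient f (x + t • v) - gradient f x, v⟫
        ≤ ‖gradient f (x + t • v) - gradient f x‖ * ‖v‖ := real_inner_le_norm _ _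
      _ ≤ L * (t * ‖v‖) * ‖v‖ := by gcongr
      _ = L * ‖v‖ ^ 2 * t := by ring
  have hone := apply_one_le_of_hasDerivAt_le hderiv hslope
  simp only [one_smul, zero_smul, add_zero] at hone
  linarith

theorem sub_le_of_gradient_eq_zero (hf : LSmooth L f) {x : E} (hx : gradient f x = 0) (y : E) :
    f y - f x ≤ L / 2 * ‖y - x‖ ^ 2 := by
  have := hf.apply_add_le x (y - x)
  rw [hx, inner_zero_left, add_sub_cancel] at this
  linarith

theorem apply_sub_smul_le (hf : LSmooth L f) (α : ℝ) (x g : E) :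
    f (x - α • g) ≤ f x - α / 2 * ‖gradient f x‖ ^ 2 - α / 2 * (1 - α * L) * ‖g‖ ^ 2
      + α / 2 * ‖gradient f x - g‖ ^ 2 := by
  have hdescent := hf.apply_add_le x (-(α • g))
  rw [← sub_eq_add_neg, inner_neg_right, inner_smul_right, norm_neg, norm_smul, mul_pow,
    Real.norm_eq_abs, sq_abs] at hdescent
  rw [norm_sub_sq_real]
  linarith

theorem gap_sub_smul_le (hf : LSmooth L f) {xstar : E} (hPL : PolyakLojasiewicz μ f xstar)
    {α : ℝ} (hα : 0 ≤ α) (x g : E) :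
    f (x - α • g) - f xstar ≤ (1 - α * μ) * (f x - f xstar)
      - α / 2 * (1 - α * L) * ‖g‖ ^ 2 + α / 2 * ‖gradient f x - g‖ ^ 2 := by
  linarith [hf.apply_sub_smul_le α x g, mul_le_mul_of_nonneg_left (hPL x) hα]

theorem le_of_quadratic_growth [Nontrivial E] (hf : LSmooth L f) {x : E}
    (hgrowth : ∀ y, f x + ⟪gradient f x, y - x⟫ + μ / 2 * ‖y - x‖ ^ 2 ≤ f y) : μ ≤ L := by
  obtain ⟨v, hv⟩ := exists_ne (0 : E)
  have hlower := hgrowth (x + v)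
  rw [add_sub_cancel_left] at hlower
  have hsq : μ / 2 * ‖v‖ ^ 2 ≤ L / 2 * ‖v‖ ^ 2 := by linarith [hf.apply_add_le x v]
  linarith [le_of_mul_le_mul_right hsq (by positivity)]

end LSmooth

theorem polyakLojasiewicz_of_strongly_convex (hμ : 0 ≤ μ)
    (hsc : ∀ y z, f y + ⟪gradient f y, z - y⟫ + μ / 2 * ‖z - y‖ ^ 2 ≤ f z) (xstar : E) :
    PolyakLojasiewicz μ f xstar := by
  intro y
  have hsquare : 0 ≤ ‖gradient f y + μ • (xstar - y)‖ ^ 2 := sq_nonneg _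
  rw [norm_add_sq_real, inner_smul_right, norm_smul, Real.norm_of_nonneg hμ] at hsquare
  linarith [mul_le_mul_of_nonneg_left (hsc y xstar) hμ]

section Average

variable {ι : Type*} [Fintype ι] {F : ι → E → ℝ}

theorem hasGradientAt_of_eq_average (hF : ∀ i, Differentiable ℝ (F i))
    (hf : ∀ y, f y = (∑ i, F i y) / Fintype.card ι) (z : E) :
    HasGradientAt f ((Fintype.card ι : ℝ)⁻¹ • ∑ i, gradient (F i) z) z := by
  have hfderiv : HasFDerivAt (fun z => (Fintype.card ι : ℝ)⁻¹ * ∑ i, F i z)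
      ((Fintype.card ι : ℝ)⁻¹ • ∑ i, fderiv ℝ (F i) z) z :=
    (HasFDerivAt.fun_sum fun i _ => (hF i z).hasFDerivAt).const_mul _
  rw [funext fun z => (hf z).trans (div_eq_inv_mul _ _), hasGradientAt_iff_hasFDerivAt]
  simpa only [map_smul, map_sum, toDual_gradient] using hfderiv

theorem LSmooth.of_eq_average [Nonempty ι] (hF : ∀ i, LSmooth L (F i))
    (hf : ∀ y, f y = (∑ i, F i y) / Fintype.card ι) : LSmooth L f where
  differentiable z :=
    (hasGradientAt_of_eq_average (fun i => (hF i).differentiable) hf z).differentiableAt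
  norm_gradient_sub_le y z := by
    have hgrad := fun z =>
      (hasGradientAt_of_eq_average (fun i => (hF i).differentiable) hf z).gradient
    rw [hgrad, hgrad, ← smul_sub, ← Finset.sum_sub_distrib]
    exact norm_inv_card_smul_sum_le fun i => (hF i).norm_gradient_sub_le y z

end Average

end Smooth

/-- Staleness at most `τ` up to horizon `K`: at each time `k` with `τ ≤ k < K`, every index occurs
among the `τ` preceding samples. The guard `τ ≤ k` keeps `k - τ` from being truncated. -/
def BoundedStaleness {ι : Type*} (idx : ℕ → ι) (τ K : ℕ) : Prop :=
  ∀ i k, τ ≤ k → k < K → ∃ j, k - τ ≤ j ∧ j < k ∧ idx j = i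

/-- A run of the incremental aggregated gradient method with step size `α`, for the fields `G i` in
place of the component gradients. The stored vector `h i k` is the value of `G i` at the last
iterate before time `k` at which `i` was sampled, and zero if there is none; `g k` is the SAG
direction. -/
structure IsIAGRun {ι E : Type*} [Fintype ι] [DecidableEq ι] [NormedAddCommGroup E]
    [NormedSpace ℝ E] (G : ι → E → E) (idx : ℕ → ι) (α : ℝ) (x g : ℕ → E) (h : ι → ℕ → E) :
    Prop where
  stored_zero : ∀ i, h i 0 = 0
  stored_succ : ∀ i k, h i (k + 1) = if idx k = i then G i (x k) else h i k
  direction : ∀ k, g k = (Fintype.card ι : ℝ)⁻¹ • (∑ i, h i k)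
    + (Fintype.card ι : ℝ)⁻¹ • (G (idx k) (x k) - h (idx k) k)
  step : ∀ k, x (k + 1) = x k - α • g k

namespace IsIAGRun

section Field

variable {ι E : Type*} [Fintype ι] [DecidableEq ι] [NormedAddCommGroup E] [NormedSpace ℝ E]
variable {G : ι → E → E} {idx : ℕ → ι} {α L : ℝ} {x g : ℕ → E} {h : ι → ℕ → E}

theorem direction_eq_average (run : IsIAGRun G idx α x g h) (k : ℕ) :
    g k = (Fintype.card ι : ℝ)⁻¹ • ∑ i, h i (k + 1) := by
  have hupdate : ∀ i, h i (k + 1) = h i k + if idx k = i then G i (x k) - h i k else 0 := by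
    intro i
    rw [run.stored_succ]
    split_ifs <;> simp
  simp_rw [run.direction, ← smul_add, hupdate, Finset.sum_add_distrib, Finset.sum_ite_eq,
    Finset.mem_univ, if_true]

theorem stored_eq_zero_or_exists (run : IsIAGRun G idx α x g h) (i : ι) (k : ℕ) :
    h i k = 0 ∨ ∃ j < k, h i k = G i (x j) := by
  induction k with
  | zero => exact .inl (run.stored_zero i)
  | succ k ih =>
    rw [run.stored_succ]
    split_ifs
    · exact .inr ⟨k, k.lt_succ_self, rfl⟩
    · exact ih.imp_right fun ⟨j, hj, hstored⟩ => ⟨j, hj.trans k.lt_succ_self, hstored⟩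

theorem exists_stored_eq_of_sampled (run : IsIAGRun G idx α x g h) {i : ι} {j k : ℕ}
    (hj : idx j = i) (hjk : j < k) : ∃ m, j ≤ m ∧ m < k ∧ h i k = G i (x m) := by
  induction k, hjk using Nat.le_induction with
  | base => exact ⟨j, le_rfl, j.lt_succ_self, by rw [run.stored_succ, if_pos hj]⟩
  | succ k hjk ih =>
    rw [run.stored_succ]
    split_ifs
    · exact ⟨k, by omega, k.lt_succ_self, rfl⟩
    · obtain ⟨m, hjm, hmk, hstored⟩ := ih
      exact ⟨m, hjm, hmk.trans k.lt_succ_self, hstored⟩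

theorem norm_sub_le_sum (run : IsIAGRun G idx α x g h) (hα : 0 ≤ α) {m n : ℕ} (hmn : m ≤ n) :
    ‖x n - x m‖ ≤ α * ∑ j ∈ Finset.Ico m n, ‖g j‖ := by
  rw [← dist_eq_norm, dist_comm, Finset.mul_sum]
  refine dist_le_Ico_sum_of_dist_le hmn fun {j} _ _ => ?_
  rw [run.step, dist_eq_norm, sub_sub_cancel, norm_smul, Real.norm_of_nonneg hα]

theorem norm_average_sub_direction_le (run : IsIAGRun G idx α x g h) (hα : 0 ≤ α) (hL : 0 ≤ L)
    (hG : ∀ i u v, ‖G i u - G i v‖ ≤ L * ‖u - v‖) {n k : ℕ}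
    (hsampled : ∀ i, ∃ j, n ≤ j ∧ j < k ∧ idx j = i) :
    ‖(Fintype.card ι : ℝ)⁻¹ • ∑ i, G i (x k) - g k‖ ≤
      L * (α * ∑ j ∈ Finset.Ico n k, ‖g j‖) := by
  have : Nonempty ι := ⟨idx 0⟩
  rw [run.direction_eq_average, ← smul_sub, ← Finset.sum_sub_distrib]
  refine norm_inv_card_smul_sum_le fun i => ?_
  obtain ⟨j, hnj, hjk, hj⟩ := hsampled i
  obtain ⟨m, hjm, hmk, hstored⟩ := run.exists_stored_eq_of_sampled hj (hjk.trans k.lt_succ_self)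
  rw [hstored]
  calc ‖G i (x k) - G i (x m)‖ ≤ L * ‖x k - x m‖ := hG i _ _
    _ ≤ L * (α * ∑ j ∈ Finset.Ico m k, ‖g j‖) := by
      gcongr
      exact run.norm_sub_le_sum hα (Nat.lt_succ_iff.1 hmk)
    _ ≤ L * (α * ∑ j ∈ Finset.Ico n k, ‖g j‖) := by
      gcongr
      exact hnj.trans hjm

theorem sq_norm_average_sub_direction_le (run : IsIAGRun G idx α x g h) (hα : 0 ≤ α) (hL : 0 ≤ L)
    (hG : ∀ i u v, ‖G i u - G i v‖ ≤ L * ‖u - v‖) {n τ : ℕ}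
    (hsampled : ∀ i, ∃ j, n ≤ j ∧ j < n + τ ∧ idx j = i) :
    ‖(Fintype.card ι : ℝ)⁻¹ • ∑ i, G i (x (n + τ)) - g (n + τ)‖ ^ 2 ≤
      (α * L) ^ 2 * τ * ∑ s ∈ Finset.range τ, ‖g (n + s)‖ ^ 2 := by
  have herror := run.norm_average_sub_direction_le hα hL hG hsampled
  rw [Finset.sum_Ico_eq_sum_range, Nat.add_sub_cancel_left] at herror
  have hcauchy := sq_sum_le_card_mul_sum_sq (s := Finset.range τ) (f := fun s => ‖g (n + s)‖)
  rw [Finset.card_range] at hcauchy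
  calc _ ≤ (L * (α * ∑ s ∈ Finset.range τ, ‖g (n + s)‖)) ^ 2 := by gcongr
    _ = (α * L) ^ 2 * (∑ s ∈ Finset.range τ, ‖g (n + s)‖) ^ 2 := by ring
    _ ≤ (α * L) ^ 2 * (τ * ∑ s ∈ Finset.range τ, ‖g (n + s)‖ ^ 2) := by gcongr
    _ = _ := by ring

section InitialPhase

variable {z : ι → E} {B : ℝ}

theorem norm_direction_le_of_forall_norm_sub_le (run : IsIAGRun G idx α x g h) (hL : 0 ≤ L)
    (hG : ∀ i u v, ‖G i u - G i v‖ ≤ L * ‖u - v‖) (hz : ∀ i, G i (z i) = 0)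
    (hB : ∀ i, ‖x 0 - z i‖ ≤ B) {R : ℝ} {k : ℕ} (hR : ∀ j ≤ k, ‖x j - x 0‖ ≤ R) :
    ‖g k‖ ≤ L * (R + B) := by
  have : Nonempty ι := ⟨idx 0⟩
  rw [run.direction_eq_average]
  refine norm_inv_card_smul_sum_le fun i => ?_
  have hR0 : 0 ≤ R := (norm_nonneg _).trans (hR k le_rfl)
  have hB0 : 0 ≤ B := (norm_nonneg _).trans (hB i)
  rcases run.stored_eq_zero_or_exists i (k + 1) with hstored | ⟨j, hj, hstored⟩
  · rw [hstored, norm_zero]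
    positivity
  · calc ‖h i (k + 1)‖ = ‖G i (x j) - G i (z i)‖ := by rw [hstored, hz, sub_zero]
      _ ≤ L * ‖x j - z i‖ := hG i _ _
      _ ≤ L * (R + B) := by
        gcongr
        exact (norm_sub_le_norm_sub_add_norm_sub _ (x 0) _).trans
          (add_le_add (hR j (Nat.lt_succ_iff.1 hj)) (hB i))

theorem norm_sub_initial_le (run : IsIAGRun G idx α x g h) (hα : 0 ≤ α) (hL : 0 ≤ L)
    (hG : ∀ i u v, ‖G i u - G i v‖ ≤ L * ‖u - v‖) (hz : ∀ i, G i (z i) = 0)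
    (hB : ∀ i, ‖x 0 - z i‖ ≤ B) {k : ℕ} (hk : 2 * (α * L * k) ≤ 1) : ‖x k - x 0‖ ≤ B := by
  have hB0 : 0 ≤ B := (norm_nonneg _).trans (hB (idx 0))
  induction k using Nat.strong_induction_on with
  | h k ih =>
    have hearlier : ∀ j < k, ‖x j - x 0‖ ≤ B := fun j hj => ih j hj (hk.trans' (by gcongr))
    have hdirection : ∀ j ∈ Finset.Ico 0 k, ‖g j‖ ≤ L * (B + B) := fun j hj =>
      run.norm_direction_le_of_forall_norm_sub_le hL hG hz hB fun i hi =>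
        hearlier i (hi.trans_lt (Finset.mem_Ico.1 hj).2)
    calc ‖x k - x 0‖ ≤ α * ∑ j ∈ Finset.Ico 0 k, ‖g j‖ := run.norm_sub_le_sum hα k.zero_le
      _ ≤ α * (k * (L * (B + B))) := by
        gcongr
        simpa using Finset.sum_le_card_nsmul _ _ _ hdirection
      _ = 2 * (α * L * k) * B := by ring
      _ ≤ B := mul_le_of_le_one_left hB0 hk

theorem norm_direction_le (run : IsIAGRun G idx α x g h) (hα : 0 ≤ α) (hL : 0 ≤ L)
    (hG : ∀ i u v, ‖G i u - G i v‖ ≤ L * ‖u - v‖) (hz : ∀ i, G i (z i) = 0)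
    (hB : ∀ i, ‖x 0 - z i‖ ≤ B) {k : ℕ} (hk : 2 * (α * L * k) ≤ 1) : ‖g k‖ ≤ 2 * L * B := by
  have hball : ∀ j ≤ k, ‖x j - x 0‖ ≤ B := fun j hj =>
    run.norm_sub_initial_le hα hL hG hz hB (hk.trans' (by gcongr))
  linarith [run.norm_direction_le_of_forall_norm_sub_le hL hG hz hB hball]

end InitialPhase

end Field

section Gradient

variable {ι E : Type*} [Fintype ι] [DecidableEq ι]
variable [NormedAddCommGroup E] [InnerProductSpace ℝ E] [CompleteSpace E]
variable {F : ι → E → ℝ} {f : E → ℝ} {idx : ℕ → ι} {α L μ B : ℝ}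
variable {x g : ℕ → E} {h : ι → ℕ → E} {xstar : E} {z : ι → E} {τ K : ℕ}

theorem gap_succ_le (run : IsIAGRun (fun i => gradient (F i)) idx α x g h) (hα : 0 ≤ α)
    (hL : 0 ≤ L) (hF : ∀ i, LSmooth L (F i)) (hf : ∀ y, f y = (∑ i, F i y) / Fintype.card ι)
    (hPL : PolyakLojasiewicz μ f xstar) {n : ℕ}
    (hsampled : ∀ i, ∃ j, n ≤ j ∧ j < n + τ ∧ idx j = i) :
    f (x (n + τ + 1)) - f xstar ≤ (1 - α * μ) * (f (x (n + τ)) - f xstar)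
      - α / 2 * (1 - α * L) * ‖g (n + τ)‖ ^ 2
      + α / 2 * ((α * L) ^ 2 * τ) * ∑ s ∈ Finset.range τ, ‖g (n + s)‖ ^ 2 := by
  have : Nonempty ι := ⟨idx 0⟩
  have hgap := (LSmooth.of_eq_average hF hf).gap_sub_smul_le hPL hα (x (n + τ)) (g (n + τ))
  have herror := run.sq_norm_average_sub_direction_le hα hL
    (fun i => (hF i).norm_gradient_sub_le) hsampled
  rw [← (hasGradientAt_of_eq_average (fun i => (hF i).differentiable) hf _).gradient] at herror
  rw [run.step]
  linarith [mul_le_mul_of_nonneg_left herror (by positivity : 0 ≤ α / 2)]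

theorem gap_le_pow_mul (run : IsIAGRun (fun i => gradient (F i)) idx α x g h) (hα : 0 ≤ α)
    (hμ : 0 ≤ μ) (hμL : μ ≤ L) (hτ : 1 ≤ τ) (hαL : α * L * τ ≤ 1 / 16)
    (hF : ∀ i, LSmooth L (F i)) (hf : ∀ y, f y = (∑ i, F i y) / Fintype.card ι)
    (hPL : PolyakLojasiewicz μ f xstar) (hmin : ∀ y, f xstar ≤ f y)
    (hstale : BoundedStaleness idx τ K) (hτK : τ ≤ K) :
    f (x K) - f xstar ≤ (1 - α * μ / 4) ^ (K - τ) * (f (x τ) - f xstar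
      + α * ((α * L) ^ 2 * τ) * weightedWindowSum (fun k => ‖g k‖ ^ 2) τ 0) := by
  have hL : 0 ≤ L := hμ.trans hμL
  have hτ1 : (1 : ℝ) ≤ τ := by exact_mod_cast hτ
  have hαμ : 0 ≤ α * μ := mul_nonneg hα hμ
  have hαμτ : α * μ * τ ≤ 1 / 16 := hαL.trans' (by gcongr)
  have hαL1 : α * L ≤ 1 / 16 := (le_mul_of_one_le_right (by positivity) hτ1).trans hαL
  have hαμ1 : α * μ ≤ 1 / 16 := hαL1.trans' (by gcongr)
  have hdelay : (α * L * τ) ^ 2 ≤ (1 / 16) ^ 2 := by gcongr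
  have hstep : ∀ n < K - τ, f (x (n + 1 + τ)) - f xstar ≤
      (1 - α * μ / 4) * (f (x (n + τ)) - f xstar) - α / 2 * (1 - α * L) * ‖g (n + τ)‖ ^ 2
        + α / 2 * ((α * L) ^ 2 * τ) * ∑ s ∈ Finset.range τ, ‖g (n + s)‖ ^ 2 := by
    intro n hn
    have hgap := run.gap_succ_le hα hL hF hf hPL (n := n) (τ := τ) fun i => by
      simpa using hstale i (n + τ) (by omega) (by omega)
    rw [add_right_comm]
    linarith [mul_nonneg hαμ (sub_nonneg.2 (hmin (x (n + τ))))]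
  have hmemory : 2 * (α / 2 * ((α * L) ^ 2 * τ)) * τ ≤ α / 2 * (1 - α * L) := calc
    _ = α * (α * L * τ) ^ 2 := by ring
    _ ≤ α * ((1 - α * L) / 2) := by gcongr; linarith
    _ = α / 2 * (1 - α * L) := by ring
  have hdecay := le_pow_mul_of_delayed_descent (F := fun n => f (x (n + τ)) - f xstar)
    (G := fun k => ‖g k‖ ^ 2) (by positivity) (by positivity) (by linarith) (by linarith)
    hmemory (fun _ => sq_nonneg _) hstep
  simp only [Nat.sub_add_cancel hτK, zero_add] at hdecay
  refine hdecay.trans_eq ?_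
  ring

theorem initial_gap_le (run : IsIAGRun (fun i => gradient (F i)) idx α x g h) (hα : 0 ≤ α)
    (hL : 0 ≤ L) (hF : ∀ i, LSmooth L (F i)) (hf : ∀ y, f y = (∑ i, F i y) / Fintype.card ι)
    (hxstar : gradient f xstar = 0) (hz : ∀ i, gradient (F i) (z i) = 0)
    (hBstar : ‖x 0 - xstar‖ ≤ B) (hB : ∀ i, ‖x 0 - z i‖ ≤ B) {k : ℕ}
    (hk : 2 * (α * L * k) ≤ 1) : f (x k) - f xstar ≤ 2 * L * B ^ 2 := by
  have : Nonempty ι := ⟨idx 0⟩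
  have hdist : ‖x k - xstar‖ ≤ B + B :=
    (norm_sub_le_norm_sub_add_norm_sub _ (x 0) _).trans <| add_le_add
      (run.norm_sub_initial_le hα hL (fun i => (hF i).norm_gradient_sub_le) hz hB hk) hBstar
  calc f (x k) - f xstar ≤ L / 2 * ‖x k - xstar‖ ^ 2 :=
        (LSmooth.of_eq_average hF hf).sub_le_of_gradient_eq_zero hxstar _
    _ ≤ L / 2 * (B + B) ^ 2 := by gcongr
    _ = 2 * L * B ^ 2 := by ring

theorem initial_memory_le (run : IsIAGRun (fun i => gradient (F i)) idx α x g h) (hα : 0 ≤ α)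
    (hL : 0 ≤ L) (hαL : α * L * τ ≤ 1 / 16) (hF : ∀ i, LSmooth L (F i))
    (hz : ∀ i, gradient (F i) (z i) = 0) (hB : ∀ i, ‖x 0 - z i‖ ≤ B) :
    α * ((α * L) ^ 2 * τ) * weightedWindowSum (fun k => ‖g k‖ ^ 2) τ 0 ≤ L * B ^ 2 := by
  have hdirection : ∀ s ∈ Finset.range τ, ‖g (0 + s)‖ ^ 2 ≤ (2 * L * B) ^ 2 := by
    intro s hs
    have hsτ : α * L * s ≤ α * L * τ := by
      gcongr
      exact (Finset.mem_range.1 hs).le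
    rw [zero_add]
    gcongr
    exact run.norm_direction_le hα hL (fun i => (hF i).norm_gradient_sub_le) hz hB (by linarith)
  have hmemory : weightedWindowSum (fun k => ‖g k‖ ^ 2) τ 0 ≤ τ * (τ * (2 * L * B) ^ 2) := by
    refine (weightedWindowSum_le (fun _ => sq_nonneg _) 0).trans ?_
    gcongr
    simpa using Finset.sum_le_card_nsmul _ _ _ hdirection
  have hcube : (α * L * τ) ^ 3 ≤ (1 / 16) ^ 3 := by gcongr
  calc _ ≤ α * ((α * L) ^ 2 * τ) * (τ * (τ * (2 * L * B) ^ 2)) := by gcongr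
    _ = 4 * (α * L * τ) ^ 3 * (L * B ^ 2) := by ring
    _ ≤ L * B ^ 2 := mul_le_of_le_one_left (by positivity) (by linarith)

end Gradient

end IsIAGRun

theorem iag_strongly_convex_general {ι E : Type*} [Fintype ι] [DecidableEq ι]
    [NormedAddCommGroup E] [InnerProductSpace ℝ E] [CompleteSpace E]
    {F : ι → E → ℝ} {f : E → ℝ} {idx : ℕ → ι} {α L μ B : ℝ} {x g : ℕ → E} {h : ι → ℕ → E}
    {xstar : E} {z : ι → E} {τ K : ℕ} (hμ : 0 ≤ μ) (hμL : μ ≤ L)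
    (hF : ∀ i, LSmooth L (F i)) (hf : ∀ y, f y = (∑ i, F i y) / Fintype.card ι)
    (hPL : PolyakLojasiewicz μ f xstar) (hmin : ∀ y, f xstar ≤ f y)
    (hz : ∀ i, gradient (F i) (z i) = 0) (hα : 0 ≤ α) (hτ : 1 ≤ τ) (hαL : α * L * τ ≤ 1 / 16)
    (run : IsIAGRun (fun i => gradient (F i)) idx α x g h)
    (hBstar : ‖x 0 - xstar‖ ≤ B) (hB : ∀ i, ‖x 0 - z i‖ ≤ B)
    (hstale : BoundedStaleness idx τ K) :
    f (x K) - f xstar ≤ 6 * L * B ^ 2 * (1 - α * μ / 4) ^ K := by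
  have hL : 0 ≤ L := hμ.trans hμL
  have hτ1 : (1 : ℝ) ≤ τ := by exact_mod_cast hτ
  have hLB : 0 ≤ L * B ^ 2 := by positivity
  have hαμτ : α * μ * τ ≤ 1 / 16 := hαL.trans' (by gcongr)
  have hrate : α * μ / 4 ≤ 1 := by
    linarith [le_mul_of_one_le_right (mul_nonneg hα hμ) hτ1]
  have hburn_in : ∀ k ≤ τ, 1 / 2 ≤ (1 - α * μ / 4) ^ k := fun k hk =>
    half_le_one_sub_pow hrate <| by
      have : α * μ * k ≤ α * μ * τ := by gcongr
      linarith
  have hinitial : ∀ k ≤ τ, f (x k) - f xstar ≤ 2 * L * B ^ 2 := fun k hk =>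
    run.initial_gap_le hα hL hF hf (gradient_eq_zero_of_forall_le hmin) hz hBstar hB <| by
      have : α * L * k ≤ α * L * τ := by gcongr
      linarith
  rcases le_total K τ with hKτ | hτK
  · linarith [hinitial K hKτ, mul_le_mul_of_nonneg_left (hburn_in K hKτ) hLB]
  have hlyapunov := add_le_add (hinitial τ le_rfl) (run.initial_memory_le hα hL hαL hF hz hB)
  have : 0 ≤ (1 - α * μ / 4) ^ (K - τ) := pow_nonneg (sub_nonneg.2 hrate) _
  calc f (x K) - f xstar
      ≤ (1 - α * μ / 4) ^ (K - τ) * (2 * L * B ^ 2 + L * B ^ 2) :=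
        (run.gap_le_pow_mul hα hμ hμL hτ hαL hF hf hPL hmin hstale hτK).trans (by gcongr)
    _ = 6 * L * B ^ 2 * ((1 - α * μ / 4) ^ (K - τ) * (1 / 2)) := by ring
    _ ≤ 6 * L * B ^ 2 * ((1 - α * μ / 4) ^ (K - τ) * (1 - α * μ / 4) ^ τ) := by
      gcongr
      exact hburn_in τ le_rfl
    _ = 6 * L * B ^ 2 * (1 - α * μ / 4) ^ K := by rw [← pow_add, Nat.sub_add_cancel hτK]

theorem iag_strongly_convex (d N : ℕ) (hd : 1 ≤ d) (hN : 1 ≤ N)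
    (L μ : ℝ) (hL : 0 < L) (hμ : 0 < μ)
    (fi : Fin N → EuclideanSpace ℝ (Fin d) → ℝ)
    (hdiff : ∀ i, Differentiable ℝ (fi i))
    (hsmooth : ∀ i x y, ‖gradient (fi i) x - gradient (fi i) y‖ ≤ L * ‖x - y‖)
    (f : EuclideanSpace ℝ (Fin d) → ℝ)
    (hf : ∀ z, f z = (∑ i, fi i z) / N)
    (hsc : ∀ y z, f y + ⟪gradient f y, z - y⟫ + μ / 2 * ‖z - y‖ ^ 2 ≤ f z)
    (xstar : EuclideanSpace ℝ (Fin d)) (hmin : ∀ y, f xstar ≤ f y)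
    (xistar : Fin N → EuclideanSpace ℝ (Fin d))
    (hxi : ∀ i y, fi i (xistar i) ≤ fi i y)
    (B : ℝ) (hB : B = max ‖xstar‖ (⨆ i, ‖xistar i‖))
    (κ : ℝ) (hκ : κ = L / μ)
    (τ K : ℕ) (hτ : 1 ≤ τ) (hK : τ < K)
    (idx : ℕ → Fin N) (α : ℝ) (hα : α = 1 / (16 * L * τ))
    (x g : ℕ → EuclideanSpace ℝ (Fin d))
    (h : Fin N → ℕ → EuclideanSpace ℝ (Fin d))
    (hx0 : x 0 = 0)
    (hh0 : ∀ i, h i 0 = 0)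
    (hhrec : ∀ i k, h i (k + 1) = if idx k = i then gradient (fi i) (x k) else h i k)
    (hg : ∀ k, g k = (N : ℝ)⁻¹ • (∑ i, h i k)
      + (N : ℝ)⁻¹ • (gradient (fi (idx k)) (x k) - h (idx k) k))
    (hxrec : ∀ k, x (k + 1) = x k - α • g k)
    (hstale : ∀ i : Fin N, ∀ k : ℕ, τ ≤ k → k ≤ K - 1 →
      ∃ j : ℕ, k - τ ≤ j ∧ j < k ∧ idx j = i) :
    f (x K) - f xstar ≤ 6 * L * B ^ 2 * (1 - 1 / (64 * (τ : ℝ) * κ)) ^ K := by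
  have : (0 : ℝ) < τ := by exact_mod_cast hτ
  have : Nonempty (Fin N) := ⟨idx 0⟩
  have : Nonempty (Fin d) := ⟨⟨0, hd⟩⟩
  have hF : ∀ i, LSmooth L (fi i) := fun i => ⟨hdiff i, hsmooth i⟩
  have hf' : ∀ y, f y = (∑ i, fi i y) / Fintype.card (Fin N) := by
    simpa only [Fintype.card_fin] using hf
  have run : IsIAGRun (fun i => gradient (fi i)) idx α x g h :=
    ⟨hh0, hhrec, by simpa only [Fintype.card_fin] using hg, hxrec⟩
  have hBi : ∀ i, ‖xistar i‖ ≤ B := fun i => hB ▸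
    (le_ciSup (f := fun i => ‖xistar i‖) (Set.finite_range _).bddAbove i).trans (le_max_right _ _)
  have hrate : 1 / (64 * (τ : ℝ) * κ) = α * μ / 4 := by
    rw [hα, hκ]
    field_simp
    norm_num
  have hα0 : 0 ≤ α := by rw [hα]; positivity
  have hαL : α * L * τ = 1 / 16 := by rw [hα]; field_simp
  rw [hrate]
  exact iag_strongly_convex_general hμ.le
    ((LSmooth.of_eq_average hF hf').le_of_quadratic_growth (hsc xstar)) hF hf'
    (polyakLojasiewicz_of_strongly_convex hμ.le hsc xstar) hmin
    (fun i => gradient_eq_zero_of_forall_le (hxi i)) hα0 hτ hαL.le run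
    (by simp [hx0, hB]) (by simpa [hx0] using hBi)
    fun i k hτk hkK => hstale i k hτk (Nat.le_sub_one_of_lt hkK)
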